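/- (Lemma 5.4) Let u : Θ → ℝ be bounded and n ≥ 1. Let 0 = s_1 < ⋯ < s_i ≤ T, x_1, …, x_{i−1} ∈ ℝ^d, x ∈ ℝ^d, write x_i := (x_1,…,x_{i−1},x), and let s ∈ [s_i, T]. Let (θ̂, ℓ̂), with θ̂ = (t̂, ω̂), be 1-optimal in the definition of u^n(s, η^{λ_i}(x)). Then there exists a constant C, depending only on T, p and ‖u‖_∞ (but not on n, s, i, the partition, x_i or the choice of 1-optimal point), such that: |x_i·1 − ω̂_{t̂}| ≤ C n^{−1/(p+1)}, ‖ℓ̂ − I‖_∞ ≤ C n^{−(3p+3)/2}, and ‖η^{λ_i}(x) − ω̂_{t̂∧·}‖_p ≤ C ( n^{−1/(p+1)} + i n^{−(3p+3)/(2p)} |x_i|_p ). -/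

import Mathlib

open MeasureTheory Set Filter Topology

noncomputable section

/-- `ℝ^d` with the Euclidean norm. -/
abbrev E (d : ℕ) := EuclideanSpace ℝ (Fin d)

/-- A point `θ = (t, ω)` of `Θ = [0,T] × Ω`, where `Ω` is the set of continuous
paths `[0,T] → ℝ^d` starting from the origin. -/
structure Theta (T : ℝ) (d : ℕ) where
  t : ℝ
  path : ℝ → E d
  ht : t ∈ Set.Icc 0 T
  cont : ContinuousOn path (Set.Icc 0 T)
  init : path 0 = 0

/-- `‖f‖_q^q := ‖f T‖^q + ∫_0^T ‖f s‖^q ds`. -/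
def pnormPow (T q : ℝ) {d : ℕ} (f : ℝ → E d) : ℝ :=
  ‖f T‖ ^ q + ∫ s in (0:ℝ)..T, ‖f s‖ ^ q

/-- `‖f‖_q := (‖f T‖^q + ∫_0^T ‖f s‖^q ds)^(1/q)`. -/
def pnorm (T q : ℝ) {d : ℕ} (f : ℝ → E d) : ℝ := (pnormPow T q f) ^ (1 / q)

/-- The pseudo-distance `d_p(θ,θ') = |t - t'| + ‖ω_{t∧·} - ω'_{t'∧·}‖_p`. -/
def dpDist (T p : ℝ) {d : ℕ} (θ θ' : Theta T d) : ℝ :=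
  |θ.t - θ'.t| + pnorm T p (fun s => θ.path (min θ.t s) - θ'.path (min θ'.t s))

/-- The set `𝓛_{t,s}` of monotone time changes: for `s > 0`, nondecreasing
`ℓ : [0,T] → ℝ` restricting to an increasing bijection from `[0,t]` onto `[0,s]`
with `ℓ(r) = r - t + s` on `(t,T]`; for `s = 0` the single function `ℓ^{t,0}`. -/
def LL (T t s : ℝ) : Set (ℝ → ℝ) :=
  if s = 0 then {fun r => if r ≤ t then 0 else r - t}
  else {ℓ | MonotoneOn ℓ (Set.Icc 0 T) ∧ StrictMonoOn ℓ (Set.Icc 0 t) ∧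
        Set.BijOn ℓ (Set.Icc 0 t) (Set.Icc 0 s) ∧ ∀ r ∈ Set.Ioc t T, ℓ r = r - t + s}

/-- `‖ℓ - I‖_∞ := sup_{0 ≤ r ≤ T} |ℓ(r) - r|`. -/
def supId (T : ℝ) (ℓ : ℝ → ℝ) : ℝ := ⨆ r : Set.Icc (0:ℝ) T, |ℓ r - (r : ℝ)|

/-- The penalization `Φ(s,η,θ,ℓ) := ‖ℓ - I‖_∞^{2/(3p+3)} + ‖η_{s∧ℓ(·)} - ω_{t∧·}‖_{p+1}^{p+1}`. -/
def Phi (T p : ℝ) {d : ℕ} (s : ℝ) (η : ℝ → E d) (θ : Theta T d) (ℓ : ℝ → ℝ) : ℝ :=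
  (supId T ℓ) ^ (2 / (3 * p + 3)) +
    pnormPow T (p + 1) (fun r => η (min s (ℓ r)) - θ.path (min θ.t r))

/-- The regularization
`u^n(s,η) := sup { u(θ) - n Φ(s,η,θ,ℓ) : θ ∈ Θ \ {𝟎}, ℓ ∈ 𝓛_{t,s} }`. -/
def reg (T p : ℝ) {d : ℕ} (u : Theta T d → ℝ) (n : ℕ) (s : ℝ) (η : ℝ → E d) : ℝ :=
  sSup { x | ∃ θ : Theta T d, ∃ ℓ : ℝ → ℝ, (θ.t, θ.path) ≠ (0, 0) ∧ ℓ ∈ LL T θ.t s ∧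
        x = u θ - (n : ℝ) * Phi T p s η θ ℓ }

/-- A càdlàg path on `[0,T]`: right-continuous with left limits. -/
def Cadlag (T : ℝ) {d : ℕ} (η : ℝ → E d) : Prop :=
  (∀ x ∈ Set.Ico (0:ℝ) T, ContinuousWithinAt η (Set.Ici x) x) ∧
  (∀ x ∈ Set.Ioc (0:ℝ) T, ∃ l : E d, Filter.Tendsto η (nhdsWithin x (Set.Iio x)) (𝓝 l))

/-- The piecewise constant path `η^{λ_i}(x)_s = Σ_j x_j 1_{{s ≥ s_j}}`. -/
def pcPath {d i : ℕ} (sVec : Fin i → ℝ) (xVec : Fin i → E d) : ℝ → E d :=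
  fun r => ∑ j : Fin i, if sVec j ≤ r then xVec j else 0

/-!
Write `η` for the piecewise constant path. Replacing its jumps by steep ramps gives continuous paths
(and, when `s = 0`, short delays `t > 0`) along which `Φ` tends to `0`, so `u^n ≥ -‖u‖_∞` and a
`1`-optimal pair has `Φ ≤ κ := (2‖u‖_∞ + 1) / n`. The two terms of `Φ` then give
`‖ℓ - I‖_∞ ≤ κ^{(3p+3)/2}` and `‖η ∘ ℓ - ω‖_{p+1} ≤ κ^{1/(p+1)}`; the value at `T` of the latter
function is `x_i·1 - ω_t`. As `‖·‖_q` is an `L^q` norm for a measure of mass `T + 1`, Minkowski and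
Hölder reduce the last estimate to `‖η - η ∘ ℓ‖_p`, and `η` and `η ∘ ℓ` differ only within distance
`‖ℓ - I‖_∞` of the jump times.
-/

lemma div_rpow_le_rpow_mul_rpow_neg {K x a b : ℝ} (hK : 1 ≤ K) (hx : 0 ≤ x) (hab : a ≤ b) :
    (K / x) ^ a ≤ K ^ b * x ^ (-a) := by
  rw [Real.div_rpow (by linarith) hx, div_eq_mul_inv, Real.rpow_neg hx]
  gcongr

lemma sum_norm_le_card_mul_rpow_sum_norm_rpow {ι F : Type*} [Fintype ι] [SeminormedAddCommGroup F]
    {p : ℝ} (hp : 0 < p) (x : ι → F) :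
    ∑ j, ‖x j‖ ≤ Fintype.card ι * (∑ j, ‖x j‖ ^ p) ^ (1 / p) := by
  rw [← nsmul_eq_mul]
  refine Finset.sum_le_card_nsmul _ _ _ fun j hj => ?_
  rw [one_div, Real.le_rpow_inv_iff_of_pos (by positivity) (by positivity) hp]
  exact Finset.single_le_sum (f := fun j => ‖x j‖ ^ p) (fun j _ => by positivity) hj

section LpNorm

variable {α F ι : Type*} {m : MeasurableSpace α} {μ : Measure α}
  [NormedAddCommGroup F] {f : α → F} {p q : ENNReal}

lemma lpNorm_mono_ae_real {g : α → ℝ} (hg : MemLp g p μ) (hfg : ∀ᵐ a ∂μ, ‖f a‖ ≤ g a) :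
    lpNorm f p μ ≤ lpNorm g p μ := by
  by_cases hf : AEStronglyMeasurable f μ
  · rw [← toReal_eLpNorm hf, ← toReal_eLpNorm hg.aestronglyMeasurable]
    exact ENNReal.toReal_mono hg.eLpNorm_ne_top (eLpNorm_mono_ae_real hfg)
  · rw [lpNorm_of_not_aestronglyMeasurable hf]
    exact lpNorm_nonneg

variable [IsFiniteMeasure μ]

lemma lpNorm_le_lpNorm_mul_rpow_measureReal_univ (hpq : p ≤ q) (hf : MemLp f q μ) :
    lpNorm f p μ ≤ lpNorm f q μ * μ.real univ ^ (1 / p.toReal - 1 / q.toReal) := by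
  rcases eq_or_ne p 0 with rfl | hp
  · rw [lpNorm_exponent_zero]
    exact mul_nonneg lpNorm_nonneg (Real.rpow_nonneg measureReal_nonneg _)
  have hexp : 0 ≤ 1 / p.toReal - 1 / q.toReal := by
    rcases eq_or_ne q ⊤ with rfl | hq
    · simp
    · have hp_pos : 0 < p.toReal := ENNReal.toReal_pos hp (ne_top_of_le_ne_top hq hpq)
      exact sub_nonneg.2 (one_div_le_one_div_of_le hp_pos (ENNReal.toReal_mono hq hpq))
  rw [← toReal_eLpNorm hf.aestronglyMeasurable, ← toReal_eLpNorm hf.aestronglyMeasurable,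
    measureReal_def, ENNReal.toReal_rpow, ← ENNReal.toReal_mul]
  exact ENNReal.toReal_mono
    (ENNReal.mul_ne_top hf.eLpNorm_ne_top (ENNReal.rpow_ne_top_of_nonneg hexp (by finiteness)))
    (eLpNorm_le_eLpNorm_mul_rpow_measure_univ hpq hf.aestronglyMeasurable)

lemma lpNorm_indicator_const_le {A : Set α} (hA : MeasurableSet A) (c : F) :
    lpNorm (A.indicator fun _ => c) p μ ≤ ‖c‖ * μ.real A ^ (1 / p.toReal) := by
  rw [← toReal_eLpNorm (aestronglyMeasurable_const.indicator hA), measureReal_def,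
    ENNReal.toReal_rpow, ← toReal_enorm, ← ENNReal.toReal_mul]
  exact ENNReal.toReal_mono (by finiteness) (eLpNorm_indicator_const_le c p)

lemma lpNorm_le_sum_of_norm_le_sum_indicator (hp : 1 ≤ p) {t : Finset ι} {A : ι → Set α}
    (hA : ∀ i ∈ t, MeasurableSet (A i)) (c : ι → ℝ)
    (hf : ∀ᵐ a ∂μ, ‖f a‖ ≤ ∑ i ∈ t, (A i).indicator (fun _ => c i) a) :
    lpNorm f p μ ≤ ∑ i ∈ t, ‖c i‖ * μ.real (A i) ^ (1 / p.toReal) := by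
  have hind : ∀ i ∈ t, MemLp ((A i).indicator fun _ => c i) p μ :=
    fun i hi => (memLp_const (c i)).indicator (hA i hi)
  calc lpNorm f p μ
      ≤ lpNorm (∑ i ∈ t, (A i).indicator fun _ => c i) p μ :=
        lpNorm_mono_ae_real (memLp_finsetSum' t hind) (by simpa only [Finset.sum_apply] using hf)
    _ ≤ ∑ i ∈ t, lpNorm ((A i).indicator fun _ => c i) p μ := lpNorm_sum_le hind hp
    _ ≤ ∑ i ∈ t, ‖c i‖ * μ.real (A i) ^ (1 / p.toReal) :=
        Finset.sum_le_sum fun i hi => lpNorm_indicator_const_le (hA i hi) (c i)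

end LpNorm

/-- The measure on `[0,T]` whose `L^q` norm is `‖·‖_q`: Lebesgue measure plus a unit mass at `T`. -/
def timeMeasure (T : ℝ) : Measure ℝ := (volume + Measure.dirac T).restrict (Icc 0 T)

section TimeMeasure

variable {d : ℕ} {T p q : ℝ} {f g : ℝ → E d}

instance : IsFiniteMeasure (timeMeasure T) := by
  rw [timeMeasure, Measure.restrict_add]
  infer_instance

lemma ae_timeMeasure_mem_Icc : ∀ᵐ r ∂timeMeasure T, r ∈ Icc 0 T :=
  ae_restrict_mem measurableSet_Icc

lemma timeMeasure_eq_add_dirac (hT : 0 ≤ T) :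
    timeMeasure T = volume.restrict (Icc 0 T) + Measure.dirac T := by
  classical
  rw [timeMeasure, Measure.restrict_add, restrict_dirac, if_pos (right_mem_Icc.2 hT)]

lemma timeMeasure_real_univ (hT : 0 ≤ T) : (timeMeasure T).real univ = T + 1 := by
  rw [timeMeasure_eq_add_dirac hT, measureReal_add_apply]
  simp [hT]

lemma timeMeasure_real_Icc_diff_le {a b : ℝ} (hab : a ≤ b) :
    (timeMeasure T).real (Icc a b \ {T}) ≤ b - a := by
  refine ENNReal.toReal_le_of_le_ofReal (sub_nonneg.2 hab) ?_
  calc timeMeasure T (Icc a b \ {T})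
      ≤ (volume + Measure.dirac T : Measure ℝ) (Icc a b \ {T}) := Measure.restrict_apply_le _ _
    _ = volume (Icc a b \ {T}) := by simp
    _ ≤ ENNReal.ofReal (b - a) := by
      rw [← Real.volume_Icc]
      exact measure_mono sdiff_subset

lemma pnormPow_eq_integral (hT : 0 ≤ T) (hf : Integrable (fun r => ‖f r‖ ^ q) (timeMeasure T)) :
    pnormPow T q f = ∫ r, ‖f r‖ ^ q ∂timeMeasure T := by
  rw [timeMeasure_eq_add_dirac hT] at hf ⊢
  rw [integral_add_measure hf.left_of_add_measure hf.right_of_add_measure, integral_dirac,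
    integral_Icc_eq_integral_Ioc, ← intervalIntegral.integral_of_le hT, add_comm, pnormPow]

lemma pnorm_eq_lpNorm (hT : 0 ≤ T) (hq : 0 < q)
    (hf : MemLp f (ENNReal.ofReal q) (timeMeasure T)) :
    pnorm T q f = lpNorm f (ENNReal.ofReal q) (timeMeasure T) := by
  have hq_ne_zero : ENNReal.ofReal q ≠ 0 := by simpa using hq
  have hf_int := hf.integrable_norm_rpow hq_ne_zero ENNReal.ofReal_ne_top
  rw [ENNReal.toReal_ofReal hq.le] at hf_int
  rw [lpNorm_eq_integral_norm_rpow_toReal hq_ne_zero ENNReal.ofReal_ne_top hf.aestronglyMeasurable,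
    ENNReal.toReal_ofReal hq.le, ← pnormPow_eq_integral hT hf_int, pnorm, one_div]

lemma pnormPow_nonneg (hT : 0 ≤ T) : 0 ≤ pnormPow T q f :=
  add_nonneg (by positivity) (intervalIntegral.integral_nonneg hT fun _ _ => by positivity)

lemma pnorm_nonneg (hT : 0 ≤ T) : 0 ≤ pnorm T q f :=
  Real.rpow_nonneg (pnormPow_nonneg hT) _

lemma pnorm_rpow (hT : 0 ≤ T) (hq : q ≠ 0) : pnorm T q f ^ q = pnormPow T q f := by
  rw [pnorm, one_div, Real.rpow_inv_rpow (pnormPow_nonneg hT) hq]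

lemma norm_apply_le_pnorm (hT : 0 ≤ T) (hq : 0 < q) : ‖f T‖ ≤ pnorm T q f := by
  rw [pnorm, one_div, Real.le_rpow_inv_iff_of_pos (norm_nonneg _) (pnormPow_nonneg hT) hq]
  exact le_add_of_nonneg_right (intervalIntegral.integral_nonneg hT fun _ _ => by positivity)

lemma pnorm_add_le (hT : 0 ≤ T) (hp : 1 ≤ p)
    (hf : MemLp f (ENNReal.ofReal p) (timeMeasure T))
    (hg : MemLp g (ENNReal.ofReal p) (timeMeasure T)) :
    pnorm T p (f + g) ≤ pnorm T p f + pnorm T p g := by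
  have hp_pos : 0 < p := by linarith
  rw [pnorm_eq_lpNorm hT hp_pos hf, pnorm_eq_lpNorm hT hp_pos hg,
    pnorm_eq_lpNorm hT hp_pos (hf.add hg)]
  exact lpNorm_add_le hf (ENNReal.one_le_ofReal.2 hp)

lemma pnorm_le_pnorm_mul_rpow (hT : 0 ≤ T) (hp : 0 < p) (hpq : p ≤ q)
    (hf : MemLp f (ENNReal.ofReal q) (timeMeasure T)) :
    pnorm T p f ≤ pnorm T q f * (T + 1) ^ (1 / p - 1 / q) := by
  have hpq' : ENNReal.ofReal p ≤ ENNReal.ofReal q := ENNReal.ofReal_le_ofReal hpq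
  have hq : 0 < q := hp.trans_le hpq
  have h := lpNorm_le_lpNorm_mul_rpow_measureReal_univ hpq' hf
  rwa [timeMeasure_real_univ hT, ENNReal.toReal_ofReal hp.le, ENNReal.toReal_ofReal hq.le,
    ← pnorm_eq_lpNorm hT hp (hf.mono_exponent hpq'), ← pnorm_eq_lpNorm hT hq hf] at h

lemma pnorm_le_of_norm_le_sum_indicator {ι : Type*} [Fintype ι] (hT : 0 ≤ T) (hp : 1 ≤ p)
    (hf : MemLp f (ENNReal.ofReal p) (timeMeasure T)) (hfT : f T = 0) {h : ℝ} (hh : 0 ≤ h)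
    (a c : ι → ℝ)
    (hfc : ∀ r ∈ Icc 0 T, ‖f r‖ ≤ ∑ i, (Icc (a i - h) (a i + h)).indicator (fun _ => c i) r) :
    pnorm T p f ≤ (∑ i, |c i|) * (2 * h) ^ (1 / p) := by
  have hp_pos : 0 < p := by linarith
  -- `T` is removed from the windows because it carries a unit mass.
  let window (i : ι) : Set ℝ := Icc (a i - h) (a i + h) \ {T}
  have hwindow_meas : ∀ i ∈ Finset.univ, MeasurableSet (window i) :=
    fun i _ => measurableSet_Icc.diff (measurableSet_singleton T)
  have hwindow (i : ι) : (timeMeasure T).real (window i) ≤ 2 * h :=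
    (timeMeasure_real_Icc_diff_le (by linarith)).trans_eq (by ring)
  have hf_window : ∀ r ∈ Icc 0 T, ‖f r‖ ≤ ∑ i, (window i).indicator (fun _ => c i) r := by
    intro r hr
    rcases eq_or_ne r T with rfl | hrT
    · simp [hfT, window]
    · simpa [window, indicator, hrT] using hfc r hr
  calc pnorm T p f = lpNorm f (ENNReal.ofReal p) (timeMeasure T) := pnorm_eq_lpNorm hT hp_pos hf
    _ ≤ ∑ i, |c i| * (timeMeasure T).real (window i) ^ (1 / p) := by
      simpa only [Real.norm_eq_abs, ENNReal.toReal_ofReal hp_pos.le] using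
        lpNorm_le_sum_of_norm_le_sum_indicator (ENNReal.one_le_ofReal.2 hp) hwindow_meas c
          (ae_timeMeasure_mem_Icc.mono hf_window)
    _ ≤ ∑ i, |c i| * (2 * h) ^ (1 / p) := by
      gcongr with i
      exact hwindow i
    _ = (∑ i, |c i|) * (2 * h) ^ (1 / p) := (Finset.sum_mul ..).symm

end TimeMeasure

section TimeChange

variable {T t s : ℝ} {ℓ : ℝ → ℝ}

lemma supId_nonneg : 0 ≤ supId T ℓ :=
  Real.iSup_nonneg fun _ => abs_nonneg _

lemma supId_le {h : ℝ} (hh : 0 ≤ h) (hℓ : ∀ r ∈ Icc 0 T, |ℓ r - r| ≤ h) : supId T ℓ ≤ h :=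
  Real.iSup_le (fun r => hℓ r r.2) hh

lemma abs_sub_le_supId (hℓ : MonotoneOn ℓ (Icc 0 T)) {r : ℝ} (hr : r ∈ Icc 0 T) :
    |ℓ r - r| ≤ supId T ℓ := by
  have hT : 0 ≤ T := hr.1.trans hr.2
  refine le_ciSup (f := fun r : Icc (0 : ℝ) T => |ℓ r - r|) ⟨|ℓ 0| + |ℓ T| + T, ?_⟩ ⟨r, hr⟩
  rintro _ ⟨⟨a, ha⟩, rfl⟩
  have hlower := hℓ (left_mem_Icc.2 hT) ha ha.1
  have hupper := hℓ ha (right_mem_Icc.2 hT) ha.2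
  refine abs_le.2 ⟨?_, ?_⟩ <;>
    linarith [ha.1, ha.2, neg_abs_le (ℓ 0), le_abs_self (ℓ T), abs_nonneg (ℓ 0), abs_nonneg (ℓ T)]

lemma monotoneOn_of_mem_LL (hℓ : ℓ ∈ LL T t s) : MonotoneOn ℓ (Icc 0 T) := by
  unfold LL at hℓ
  split_ifs at hℓ with hs
  · obtain rfl := mem_singleton_iff.1 hℓ
    intro a _ b _ hab
    beta_reduce
    split_ifs <;> linarith
  · exact hℓ.1

lemma le_apply_of_mem_LL (hs : 0 ≤ s) (ht : t ∈ Icc 0 T) (hℓ : ℓ ∈ LL T t s) : s ≤ ℓ T := by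
  have hmono := monotoneOn_of_mem_LL hℓ
  unfold LL at hℓ
  split_ifs at hℓ with hs_zero
  · obtain rfl := mem_singleton_iff.1 hℓ
    beta_reduce
    split_ifs <;> linarith
  · obtain ⟨-, -, hbij, -⟩ := hℓ
    obtain ⟨r, hr, rfl⟩ := hbij.surjOn (right_mem_Icc.2 hs)
    have hrT : r ≤ T := hr.2.trans ht.2
    exact hmono ⟨hr.1, hrT⟩ ⟨hr.1.trans hrT, le_rfl⟩ hrT

lemma eventually_exists_mem_LL_abs_sub_le (hT : 0 < T) (hs : s ∈ Icc 0 T) :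
    ∀ᶠ h in 𝓝[>] 0, ∃ t ∈ Icc s T, h ≤ t ∧
      ∃ ℓ ∈ LL T t s, ∀ r ∈ Icc 0 T, |ℓ r - r| ≤ h := by
  rcases hs.1.eq_or_lt with rfl | hs_pos
  · filter_upwards [Ioo_mem_nhdsGT hT] with h hh
    refine ⟨h, ⟨hh.1.le, hh.2.le⟩, le_rfl, fun r => if r ≤ h then 0 else r - h, by simp [LL], ?_⟩
    intro r hr
    beta_reduce
    split_ifs <;> refine abs_le.2 ⟨?_, ?_⟩ <;> linarith [hr.1, hh.1]
  · filter_upwards [Ioo_mem_nhdsGT hs_pos] with h hh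
    refine ⟨s, ⟨le_rfl, hs.2⟩, hh.2.le, id, ?_, fun r _ => by simpa using hh.1.le⟩
    rw [LL, if_neg hs_pos.ne']
    exact ⟨monotone_id.monotoneOn _, strictMono_id.strictMonoOn _, bijOn_id _, fun r _ => by simp⟩

end TimeChange

section PcPath

variable {d k : ℕ} {T s r : ℝ} {sVec : Fin k → ℝ} {xVec : Fin k → E d}

lemma pcPath_eq_sum (hr : ∀ j, sVec j ≤ r) : pcPath sVec xVec r = ∑ j, xVec j :=
  Finset.sum_congr rfl fun j _ => if_pos (hr j)

lemma pcPath_min (hs : ∀ j, sVec j ≤ s) : pcPath sVec xVec (min s r) = pcPath sVec xVec r := by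
  simp [pcPath, hs]

lemma measurable_pcPath : Measurable (pcPath sVec xVec) :=
  Finset.measurable_fun_sum _ fun _ _ =>
    Measurable.ite measurableSet_Ici measurable_const measurable_const

lemma norm_pcPath_le : ‖pcPath sVec xVec r‖ ≤ ∑ j, ‖xVec j‖ := by
  refine (norm_sum_le _ _).trans (Finset.sum_le_sum fun j _ => ?_)
  split_ifs <;> simp

lemma norm_pcPath_sub_sum_smul_le {r' h : ℝ} {w : Fin k → ℝ} (hr : |r' - r| ≤ h)
    (hw : ∀ j, w j ∈ Icc (0 : ℝ) 1) (hw_one : ∀ j, sVec j + h < r → w j = 1)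
    (hw_zero : ∀ j, r < sVec j - h → w j = 0) :
    ‖pcPath sVec xVec r' - ∑ j, w j • xVec j‖ ≤
      ∑ j, (Icc (sVec j - h) (sVec j + h)).indicator (fun _ => ‖xVec j‖) r := by
  obtain ⟨hr_lower, hr_upper⟩ := abs_le.1 hr
  rw [pcPath, ← Finset.sum_sub_distrib]
  refine (norm_sum_le _ _).trans (Finset.sum_le_sum fun j _ => ?_)
  rcases lt_or_ge r (sVec j - h) with hbefore | hlower
  · rw [if_neg (by linarith), hw_zero j hbefore, zero_smul, sub_zero, norm_zero]
    exact indicator_nonneg (fun _ _ => norm_nonneg _) _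
  rcases lt_or_ge (sVec j + h) r with hafter | hupper
  · rw [if_pos (by linarith), hw_one j hafter, one_smul, sub_self, norm_zero]
    exact indicator_nonneg (fun _ _ => norm_nonneg _) _
  have hjump : (if sVec j ≤ r' then xVec j else 0) - w j • xVec j =
      ((if sVec j ≤ r' then 1 else 0) - w j) • xVec j := by
    split_ifs <;> simp [sub_smul]
  rw [indicator_of_mem (mem_Icc.2 ⟨hlower, hupper⟩), hjump, norm_smul]
  refine mul_le_of_le_one_left (norm_nonneg _) (abs_le.2 ?_)
  have hwj := hw j
  split_ifs <;> constructor <;> linarith [hwj.1, hwj.2]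

lemma norm_pcPath_sub_pcPath_le {r' h : ℝ} (hr : |r' - r| ≤ h) :
    ‖pcPath sVec xVec r - pcPath sVec xVec r'‖ ≤
      ∑ j, (Icc (sVec j - h) (sVec j + h)).indicator (fun _ => ‖xVec j‖) r := by
  obtain ⟨hr_lower, hr_upper⟩ := abs_le.1 hr
  have hpath : pcPath sVec xVec r' = ∑ j, (if sVec j ≤ r' then (1 : ℝ) else 0) • xVec j := by
    simp only [pcPath, ite_smul, one_smul, zero_smul]
  rw [hpath]
  refine norm_pcPath_sub_sum_smul_le (by simpa using (abs_nonneg _).trans hr) (fun j => ?_)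
    (fun j hj => if_pos (by linarith)) (fun j hj => if_neg (by linarith))
  split_ifs <;> simp

lemma memLp_pcPath_comp {q : ENNReal} {ℓ : ℝ → ℝ} (hℓ : MonotoneOn ℓ (Icc 0 T)) :
    MemLp (fun r => pcPath sVec xVec (ℓ r)) q (timeMeasure T) :=
  MemLp.of_bound (measurable_pcPath.comp_aemeasurable
      (aemeasurable_restrict_of_monotoneOn measurableSet_Icc hℓ)).aestronglyMeasurable _
    (Eventually.of_forall fun _ => norm_pcPath_le)

lemma memLp_pcPath_sub_pcPath_comp {q : ENNReal} {ℓ : ℝ → ℝ} (hℓ : MonotoneOn ℓ (Icc 0 T)) :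
    MemLp (fun r => pcPath sVec xVec r - pcPath sVec xVec (ℓ r)) q (timeMeasure T) :=
  (memLp_pcPath_comp (monotone_id.monotoneOn _)).sub (memLp_pcPath_comp hℓ)

lemma memLp_stoppedPath {q : ENNReal} (θ : Theta T d) :
    MemLp (fun r => θ.path (min θ.t r)) q (timeMeasure T) := by
  have hmin : MapsTo (min θ.t) (Icc 0 T) (Icc 0 T) :=
    fun r hr => ⟨le_min θ.ht.1 hr.1, (min_le_right _ _).trans hr.2⟩
  have hcont : ContinuousOn (fun r => θ.path (min θ.t r)) (Icc 0 T) :=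
    θ.cont.comp (by fun_prop) hmin
  obtain ⟨C, hC⟩ := isCompact_Icc.exists_bound_of_continuousOn hcont
  exact MemLp.of_bound (hcont.aestronglyMeasurable measurableSet_Icc) C
    (ae_timeMeasure_mem_Icc.mono hC)

lemma memLp_pcPath_comp_sub_stoppedPath {q : ENNReal} {ℓ : ℝ → ℝ} (hℓ : MonotoneOn ℓ (Icc 0 T))
    (θ : Theta T d) :
    MemLp (fun r => pcPath sVec xVec (ℓ r) - θ.path (min θ.t r)) q (timeMeasure T) :=
  (memLp_pcPath_comp hℓ).sub (memLp_stoppedPath θ)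

end PcPath

/-- The continuous function rising linearly from `0` at `c` to `1` at `c + h`, which smooths the
jump indicator `1_{c ≤ r}`. -/
def ramp (c h r : ℝ) : ℝ := max 0 (min 1 ((r - c) / h))

section Ramp

variable {c h r : ℝ}

lemma continuous_ramp : Continuous (ramp c h) := by
  unfold ramp
  fun_prop

lemma ramp_mem_Icc : ramp c h r ∈ Icc (0 : ℝ) 1 :=
  ⟨le_max_left _ _, max_le zero_le_one (min_le_left _ _)⟩

lemma ramp_eq_zero (hh : 0 < h) (hr : r ≤ c) : ramp c h r = 0 :=
  max_eq_left ((min_le_right _ _).trans (div_nonpos_of_nonpos_of_nonneg (by linarith) hh.le))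

lemma ramp_eq_one (hh : 0 < h) (hr : c + h ≤ r) : ramp c h r = 1 := by
  rw [ramp, min_eq_left ((one_le_div hh).2 (by linarith)), max_eq_right zero_le_one]

end Ramp

/-- The path `η^{λ_i}(x)` with each jump replaced by a ramp of length `h`. Ramps that would end
after time `t` are moved back to `[t - h, t]`, so that all of them are completed at time `t`. -/
def smoothedPath {d k : ℕ} (t h : ℝ) (sVec : Fin k → ℝ) (xVec : Fin k → E d) (r : ℝ) : E d :=
  ∑ j, ramp (min (sVec j) (t - h)) h r • xVec j

section Approximation

variable {d k : ℕ} {T p s t h r : ℝ} {sVec : Fin k → ℝ} {xVec : Fin k → E d} {ℓ : ℝ → ℝ}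

lemma continuous_smoothedPath : Continuous (smoothedPath t h sVec xVec) :=
  continuous_finsetSum _ fun _ _ => continuous_ramp.smul continuous_const

lemma smoothedPath_zero (hh : 0 < h) (hht : h ≤ t) (hsVec : ∀ j, 0 ≤ sVec j) :
    smoothedPath t h sVec xVec 0 = 0 :=
  Finset.sum_eq_zero fun j _ => by
    rw [ramp_eq_zero hh (le_min (hsVec j) (sub_nonneg.2 hht)), zero_smul]

lemma smoothedPath_self (hh : 0 < h) : smoothedPath t h sVec xVec t = ∑ j, xVec j :=
  Finset.sum_congr rfl fun j _ => by
    rw [ramp_eq_one hh (by linarith [min_le_right (sVec j) (t - h)]), one_smul]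

lemma norm_pcPath_sub_smoothedPath_le {r' : ℝ} (hh : 0 < h) (hr : |r' - r| ≤ h)
    (hsVec : ∀ j, sVec j ≤ t) :
    ‖pcPath sVec xVec r' - smoothedPath t h sVec xVec (min t r)‖ ≤
      ∑ j, (Icc (sVec j - h) (sVec j + h)).indicator (fun _ => ‖xVec j‖) r := by
  refine norm_pcPath_sub_sum_smul_le hr (fun j => ramp_mem_Icc)
    (fun j hj => ramp_eq_one hh (le_min ?_ ?_)) (fun j hj => ramp_eq_zero hh ?_)
  · linarith [min_le_right (sVec j) (t - h)]
  · linarith [min_le_left (sVec j) (t - h)]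
  · exact (min_le_right _ _).trans (le_min (by linarith) (by linarith [hsVec j]))

lemma Phi_pcPath (hsVec : ∀ j, sVec j ≤ s) (θ : Theta T d) :
    Phi T p s (pcPath sVec xVec) θ ℓ = supId T ℓ ^ (2 / (3 * p + 3)) +
      pnormPow T (p + 1) (fun r => pcPath sVec xVec (ℓ r) - θ.path (min θ.t r)) := by
  simp only [Phi, pcPath_min hsVec]

lemma exists_Phi_le_of_abs_sub_le (hp : 0 ≤ p) (hs : 0 ≤ s) (hsVec : ∀ j, sVec j ∈ Icc 0 s)
    (ht : t ∈ Icc s T) (hh : 0 < h) (hht : h ≤ t) (hℓ : ℓ ∈ LL T t s)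
    (hℓh : ∀ r ∈ Icc 0 T, |ℓ r - r| ≤ h) :
    ∃ θ : Theta T d, θ.t = t ∧ Phi T p s (pcPath sVec xVec) θ ℓ ≤
      h ^ (2 / (3 * p + 3)) + (∑ j, ‖xVec j‖) ^ (p + 1) * (2 * h) := by
  have htT : t ∈ Icc 0 T := ⟨hs.trans ht.1, ht.2⟩
  have hT : 0 ≤ T := htT.1.trans htT.2
  let θ : Theta T d := ⟨t, smoothedPath t h sVec xVec, htT, continuous_smoothedPath.continuousOn,
    smoothedPath_zero hh hht fun j => (hsVec j).1⟩
  refine ⟨θ, rfl, ?_⟩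
  let diff (r : ℝ) : E d := pcPath sVec xVec (ℓ r) - smoothedPath t h sVec xVec (min t r)
  have hdiff_T : diff T = 0 := by
    have hℓT : s ≤ ℓ T := le_apply_of_mem_LL hs htT hℓ
    simp only [diff, pcPath_eq_sum fun j => (hsVec j).2.trans hℓT, min_eq_left ht.2,
      smoothedPath_self hh, sub_self]
  have hdiff : pnorm T (p + 1) diff ≤ (∑ j, ‖xVec j‖) * (2 * h) ^ (1 / (p + 1)) := by
    simpa only [abs_norm] using pnorm_le_of_norm_le_sum_indicator hT (by linarith)
      (memLp_pcPath_comp_sub_stoppedPath (monotoneOn_of_mem_LL hℓ) θ) hdiff_T hh.le sVec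
      (fun j => ‖xVec j‖)
      fun r hr => norm_pcPath_sub_smoothedPath_le hh (hℓh r hr) fun j => (hsVec j).2.trans ht.1
  rw [Phi_pcPath fun j => (hsVec j).2]
  refine add_le_add (Real.rpow_le_rpow supId_nonneg (supId_le hh.le hℓh) (by positivity)) ?_
  calc pnormPow T (p + 1) diff
      = pnorm T (p + 1) diff ^ (p + 1) := (pnorm_rpow hT (by linarith)).symm
    _ ≤ ((∑ j, ‖xVec j‖) * (2 * h) ^ (1 / (p + 1))) ^ (p + 1) :=
      Real.rpow_le_rpow (pnorm_nonneg hT) hdiff (by linarith)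
    _ = (∑ j, ‖xVec j‖) ^ (p + 1) * (2 * h) := by
      rw [Real.mul_rpow (by positivity) (by positivity), one_div,
        Real.rpow_inv_rpow (by positivity) (by linarith)]

lemma exists_Phi_le (hT : 0 < T) (hp : 0 ≤ p) (hs : s ∈ Icc 0 T)
    (hsVec : ∀ j, sVec j ∈ Icc 0 s) (xVec : Fin k → E d) {ε : ℝ} (hε : 0 < ε) :
    ∃ (θ : Theta T d) (ℓ : ℝ → ℝ), (θ.t, θ.path) ≠ (0, 0) ∧ ℓ ∈ LL T θ.t s ∧
      Phi T p s (pcPath sVec xVec) θ ℓ ≤ ε := by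
  let bound (h : ℝ) : ℝ := h ^ (2 / (3 * p + 3)) + (∑ j, ‖xVec j‖) ^ (p + 1) * (2 * h)
  have hexp : 0 < 2 / (3 * p + 3) := by positivity
  have hbound : Tendsto bound (𝓝[>] 0) (𝓝 0) := by
    have hcont : Continuous bound := by
      have := Real.continuous_rpow_const hexp.le
      fun_prop
    have hzero : bound 0 = 0 := by simp [bound, Real.zero_rpow hexp.ne']
    simpa only [hzero] using hcont.continuousWithinAt.tendsto (s := Ioi 0) (x := 0)
  obtain ⟨h, ⟨t, ht, hht, ℓ, hℓ, hℓh⟩, hhε, hh⟩ :=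
    ((eventually_exists_mem_LL_abs_sub_le hT hs).and
      ((hbound.eventually_le_const hε).and self_mem_nhdsWithin)).exists
  obtain ⟨θ, rfl, hΦ⟩ := exists_Phi_le_of_abs_sub_le (xVec := xVec) hp hs.1 hsVec ht hh hht hℓ hℓh
  have hθ : θ.t ≠ 0 := (lt_of_lt_of_le hh hht).ne'
  exact ⟨θ, ℓ, fun h => hθ (congrArg Prod.fst h), hℓ, hΦ.trans hhε⟩

end Approximation

section Regularization

variable {d k : ℕ} {T p s M : ℝ} {η : ℝ → E d} {θ : Theta T d} {ℓ : ℝ → ℝ} {u : Theta T d → ℝ}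

lemma Phi_nonneg : 0 ≤ Phi T p s η θ ℓ :=
  add_nonneg (Real.rpow_nonneg supId_nonneg _) (pnormPow_nonneg (θ.ht.1.trans θ.ht.2))

lemma sub_mul_Phi_le_reg (hu : ∀ θ, u θ ≤ M) (n : ℕ)
    (hθ : (θ.t, θ.path) ≠ (0, 0)) (hℓ : ℓ ∈ LL T θ.t s) :
    u θ - n * Phi T p s η θ ℓ ≤ reg T p u n s η := by
  refine le_csSup ⟨M, ?_⟩ ⟨θ, ℓ, hθ, hℓ, rfl⟩
  rintro _ ⟨θ', ℓ', -, -, rfl⟩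
  exact (sub_le_self _ (mul_nonneg n.cast_nonneg Phi_nonneg)).trans (hu θ')

lemma neg_le_reg_pcPath (hT : 0 < T) (hp : 0 ≤ p) (hu : ∀ θ, |u θ| ≤ M) (n : ℕ)
    (hs : s ∈ Icc 0 T) {sVec : Fin k → ℝ} (hsVec : ∀ j, sVec j ∈ Icc 0 s) (xVec : Fin k → E d) :
    -M ≤ reg T p u n s (pcPath sVec xVec) := by
  refine le_of_forall_pos_le_add fun ε hε => ?_
  obtain ⟨δ, hδ, hnδ⟩ := exists_pos_mul_lt hε (n : ℝ)
  obtain ⟨θ, ℓ, hθ, hℓ, hΦ⟩ := exists_Phi_le hT hp hs hsVec xVec hδ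
  have hreg := sub_mul_Phi_le_reg (p := p) (η := pcPath sVec xVec)
    (fun θ => (abs_le.1 (hu θ)).2) n hθ hℓ
  have hnΦ := mul_le_mul_of_nonneg_left hΦ n.cast_nonneg
  linarith [(abs_le.1 (hu θ)).1]

lemma Phi_pcPath_le_div_of_optimal (hT : 0 < T) (hp : 0 ≤ p) (hu : ∀ θ, |u θ| ≤ M) {n : ℕ}
    (hn : 0 < n) (hs : s ∈ Icc 0 T) {sVec : Fin k → ℝ} (hsVec : ∀ j, sVec j ∈ Icc 0 s)
    {xVec : Fin k → E d} {δ : ℝ}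
    (hopt : reg T p u n s (pcPath sVec xVec) - u θ + n * Phi T p s (pcPath sVec xVec) θ ℓ < δ) :
    Phi T p s (pcPath sVec xVec) θ ℓ ≤ (2 * M + δ) / n := by
  rw [le_div_iff₀' (Nat.cast_pos.2 hn)]
  linarith [neg_le_reg_pcPath hT hp hu n hs hsVec xVec, (abs_le.1 (hu θ)).2]

end Regularization

section PenaltyEstimates

variable {d k : ℕ} {T p s κ : ℝ} {sVec : Fin k → ℝ} {xVec : Fin k → E d} {θ : Theta T d}
  {ℓ : ℝ → ℝ}

lemma supId_le_rpow_of_Phi_le {η : ℝ → E d} (hp : 0 ≤ p) (hΦ : Phi T p s η θ ℓ ≤ κ) :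
    supId T ℓ ≤ κ ^ ((3 * p + 3) / 2) := by
  have hT : 0 ≤ T := θ.ht.1.trans θ.ht.2
  have hκ : 0 ≤ κ := Phi_nonneg.trans hΦ
  rw [← inv_div, Real.le_rpow_inv_iff_of_pos supId_nonneg hκ (by positivity)]
  exact (le_add_of_nonneg_right (pnormPow_nonneg hT)).trans hΦ

lemma pnorm_le_rpow_of_Phi_le (hp : 0 ≤ p) (hsVec : ∀ j, sVec j ≤ s)
    (hΦ : Phi T p s (pcPath sVec xVec) θ ℓ ≤ κ) :
    pnorm T (p + 1) (fun r => pcPath sVec xVec (ℓ r) - θ.path (min θ.t r)) ≤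
      κ ^ (1 / (p + 1)) := by
  have hT : 0 ≤ T := θ.ht.1.trans θ.ht.2
  rw [Phi_pcPath hsVec] at hΦ
  exact Real.rpow_le_rpow (pnormPow_nonneg hT)
    ((le_add_of_nonneg_left (Real.rpow_nonneg supId_nonneg _)).trans hΦ) (by positivity)

lemma norm_sum_sub_path_le_rpow_of_Phi_le (hp : 0 ≤ p) (hs : 0 ≤ s) (hsVec : ∀ j, sVec j ≤ s)
    (hℓ : ℓ ∈ LL T θ.t s) (hΦ : Phi T p s (pcPath sVec xVec) θ ℓ ≤ κ) :
    ‖(∑ j, xVec j) - θ.path θ.t‖ ≤ κ ^ (1 / (p + 1)) := by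
  have hT : 0 ≤ T := θ.ht.1.trans θ.ht.2
  have hℓT : s ≤ ℓ T := le_apply_of_mem_LL hs θ.ht hℓ
  have hT_norm := norm_apply_le_pnorm (q := p + 1) (T := T)
    (f := fun r => pcPath sVec xVec (ℓ r) - θ.path (min θ.t r)) hT (by linarith)
  rw [pcPath_eq_sum fun j => (hsVec j).trans hℓT, min_eq_left θ.ht.2] at hT_norm
  exact hT_norm.trans (pnorm_le_rpow_of_Phi_le hp hsVec hΦ)

lemma pnorm_pcPath_sub_pcPath_comp_le {t : ℝ} (hp : 1 ≤ p) (hs : s ∈ Icc 0 T)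
    (hsVec : ∀ j, sVec j ≤ s) (ht : t ∈ Icc 0 T) (hℓ : ℓ ∈ LL T t s) :
    pnorm T p (fun r => pcPath sVec xVec r - pcPath sVec xVec (ℓ r)) ≤
      (∑ j, ‖xVec j‖) * (2 * supId T ℓ) ^ (1 / p) := by
  have hmono := monotoneOn_of_mem_LL hℓ
  have hℓT : s ≤ ℓ T := le_apply_of_mem_LL hs.1 ht hℓ
  have hT_zero : pcPath sVec xVec T - pcPath sVec xVec (ℓ T) = 0 := by
    rw [pcPath_eq_sum fun j => (hsVec j).trans hs.2, pcPath_eq_sum fun j => (hsVec j).trans hℓT,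
      sub_self]
  simpa only [abs_norm] using pnorm_le_of_norm_le_sum_indicator (hs.1.trans hs.2) hp
    (memLp_pcPath_sub_pcPath_comp hmono) hT_zero supId_nonneg sVec (fun j => ‖xVec j‖)
    fun r hr => norm_pcPath_sub_pcPath_le (abs_sub_le_supId hmono hr)

lemma pnorm_pcPath_sub_pcPath_comp_le_of_Phi_le (hp : 1 ≤ p) (hs : s ∈ Icc 0 T)
    (hsVec : ∀ j, sVec j ≤ s) (hℓ : ℓ ∈ LL T θ.t s)
    (hΦ : Phi T p s (pcPath sVec xVec) θ ℓ ≤ κ) :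
    pnorm T p (fun r => pcPath sVec xVec r - pcPath sVec xVec (ℓ r)) ≤
      2 * (k * κ ^ ((3 * p + 3) / (2 * p)) * (∑ j, ‖xVec j‖ ^ p) ^ (1 / p)) := by
  have hp_pos : 0 < p := by linarith
  have hκ : 0 ≤ κ := Phi_nonneg.trans hΦ
  have hsupId : supId T ℓ ≤ κ ^ ((3 * p + 3) / 2) := supId_le_rpow_of_Phi_le hp_pos.le hΦ
  have hwindow : (2 * supId T ℓ) ^ (1 / p) ≤ 2 * κ ^ ((3 * p + 3) / (2 * p)) :=
    calc (2 * supId T ℓ) ^ (1 / p)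
        ≤ (2 * κ ^ ((3 * p + 3) / 2)) ^ (1 / p) :=
          Real.rpow_le_rpow (mul_nonneg zero_le_two supId_nonneg) (by gcongr) (by positivity)
      _ = 2 ^ (1 / p) * κ ^ ((3 * p + 3) / (2 * p)) := by
          rw [Real.mul_rpow zero_le_two (by positivity), ← Real.rpow_mul hκ, div_mul_div_comm,
            mul_one]
      _ ≤ 2 * κ ^ ((3 * p + 3) / (2 * p)) := by
          gcongr
          exact Real.rpow_le_self_of_one_le one_le_two ((div_le_one hp_pos).2 hp)
  calc pnorm T p (fun r => pcPath sVec xVec r - pcPath sVec xVec (ℓ r))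
      ≤ (∑ j, ‖xVec j‖) * (2 * supId T ℓ) ^ (1 / p) :=
        pnorm_pcPath_sub_pcPath_comp_le hp hs hsVec θ.ht hℓ
    _ ≤ (k * (∑ j, ‖xVec j‖ ^ p) ^ (1 / p)) * (2 * κ ^ ((3 * p + 3) / (2 * p))) := by
        gcongr
        · exact Real.rpow_nonneg (mul_nonneg zero_le_two supId_nonneg) _
        · simpa only [Fintype.card_fin] using sum_norm_le_card_mul_rpow_sum_norm_rpow hp_pos xVec
    _ = 2 * (k * κ ^ ((3 * p + 3) / (2 * p)) * (∑ j, ‖xVec j‖ ^ p) ^ (1 / p)) := by ring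

lemma pnorm_pcPath_comp_sub_stoppedPath_le_of_Phi_le (hp : 1 ≤ p) (hsVec : ∀ j, sVec j ≤ s)
    (hℓ : ℓ ∈ LL T θ.t s) (hΦ : Phi T p s (pcPath sVec xVec) θ ℓ ≤ κ) :
    pnorm T p (fun r => pcPath sVec xVec (ℓ r) - θ.path (min θ.t r)) ≤
      (T + 1) * κ ^ (1 / (p + 1)) := by
  have hT : 0 ≤ T := θ.ht.1.trans θ.ht.2
  have hp_pos : 0 < p := by linarith
  have hmass : (T + 1) ^ (1 / p - 1 / (p + 1)) ≤ T + 1 := by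
    refine Real.rpow_le_self_of_one_le (by linarith) ?_
    have hp_inv : 1 / p ≤ 1 := (div_le_one hp_pos).2 hp
    have hp_succ_inv : 0 ≤ 1 / (p + 1) := by positivity
    linarith
  calc pnorm T p (fun r => pcPath sVec xVec (ℓ r) - θ.path (min θ.t r))
      ≤ pnorm T (p + 1) (fun r => pcPath sVec xVec (ℓ r) - θ.path (min θ.t r)) *
          (T + 1) ^ (1 / p - 1 / (p + 1)) :=
        pnorm_le_pnorm_mul_rpow hT hp_pos (by linarith)
          (memLp_pcPath_comp_sub_stoppedPath (monotoneOn_of_mem_LL hℓ) θ)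
    _ ≤ κ ^ (1 / (p + 1)) * (T + 1) :=
        mul_le_mul (pnorm_le_rpow_of_Phi_le hp_pos.le hsVec hΦ) hmass (by positivity)
          (Real.rpow_nonneg (Phi_nonneg.trans hΦ) _)
    _ = (T + 1) * κ ^ (1 / (p + 1)) := mul_comm _ _

lemma pnorm_pcPath_sub_stoppedPath_le_of_Phi_le (hp : 1 ≤ p) (hs : s ∈ Icc 0 T)
    (hsVec : ∀ j, sVec j ≤ s) (hℓ : ℓ ∈ LL T θ.t s)
    (hΦ : Phi T p s (pcPath sVec xVec) θ ℓ ≤ κ) :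
    pnorm T p (fun r => pcPath sVec xVec r - θ.path (min θ.t r)) ≤
      (T + 1) * κ ^ (1 / (p + 1)) +
        2 * (k * κ ^ ((3 * p + 3) / (2 * p)) * (∑ j, ‖xVec j‖ ^ p) ^ (1 / p)) := by
  have hmono := monotoneOn_of_mem_LL hℓ
  have hsplit : (fun r => pcPath sVec xVec r - θ.path (min θ.t r)) =
      (fun r => pcPath sVec xVec (ℓ r) - θ.path (min θ.t r)) +
        fun r => pcPath sVec xVec r - pcPath sVec xVec (ℓ r) := by
    ext1 r
    exact (sub_add_sub_cancel' _ _ _).symm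
  rw [hsplit]
  exact (pnorm_add_le (hs.1.trans hs.2) hp (memLp_pcPath_comp_sub_stoppedPath hmono θ)
    (memLp_pcPath_sub_pcPath_comp hmono)).trans
    (add_le_add (pnorm_pcPath_comp_sub_stoppedPath_le_of_Phi_le hp hsVec hℓ hΦ)
      (pnorm_pcPath_sub_pcPath_comp_le_of_Phi_le hp hs hsVec hℓ hΦ))

end PenaltyEstimates

theorem stmt3_general (T : ℝ) (hT : 0 < T) (d : ℕ) (p : ℝ) (hp : 1 ≤ p) (M : ℝ) :
    ∃ C > 0, ∀ u : Theta T d → ℝ, (∀ θ : Theta T d, |u θ| ≤ M) →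
    ∀ n : ℕ, 1 ≤ n →
    ∀ (k : ℕ) (sVec : Fin k → ℝ) (xVec : Fin k → E d),
    ∀ s ∈ Icc 0 T, (∀ j, sVec j ∈ Icc 0 s) →
    ∀ (θhat : Theta T d) (ℓhat : ℝ → ℝ), ℓhat ∈ LL T θhat.t s →
      reg T p u n s (pcPath sVec xVec) - u θhat
          + (n : ℝ) * Phi T p s (pcPath sVec xVec) θhat ℓhat < 1 →
      ‖(∑ j, xVec j) - θhat.path θhat.t‖ ≤ C * (n : ℝ) ^ (-(1 / (p + 1))) ∧
      supId T ℓhat ≤ C * (n : ℝ) ^ (-((3 * p + 3) / 2)) ∧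
      pnorm T p (fun r => pcPath sVec xVec r - θhat.path (min θhat.t r)) ≤
        C * ((n : ℝ) ^ (-(1 / (p + 1)))
          + (k : ℝ) * (n : ℝ) ^ (-((3 * p + 3) / (2 * p)))
              * (∑ j, ‖xVec j‖ ^ p) ^ (1 / p)) := by
  let K : ℝ := 2 * |M| + 1
  let b : ℝ := (3 * p + 3) / 2
  have hK : 1 ≤ K := by linarith [abs_nonneg M]
  refine ⟨(T + 2) * K ^ b, by positivity, ?_⟩
  intro u hu n hn k sVec xVec s hs hsVec θ ℓ hℓ hopt
  have hp₀ : 0 ≤ p := by linarith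
  have hsVec_le (j : Fin k) : sVec j ≤ s := (hsVec j).2
  have hΦ : Phi T p s (pcPath sVec xVec) θ ℓ ≤ K / n :=
    Phi_pcPath_le_div_of_optimal hT hp₀ (fun θ => (hu θ).trans (le_abs_self M)) hn hs hsVec hopt
  have hpow {a : ℝ} (ha : a ≤ b) : (K / n) ^ a ≤ K ^ b * (n : ℝ) ^ (-a) :=
    div_rpow_le_rpow_mul_rpow_neg hK n.cast_nonneg ha
  have hC : K ^ b ≤ (T + 2) * K ^ b := le_mul_of_one_le_left (by positivity) (by linarith)
  have hb : 1 ≤ b := by dsimp only [b]; linarith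
  have hexp₁ : 1 / (p + 1) ≤ b := ((div_le_one (by positivity)).2 (by linarith)).trans hb
  have hexp₂ : (3 * p + 3) / (2 * p) ≤ b :=
    div_le_div_of_nonneg_left (by positivity) two_pos (by linarith)
  refine ⟨?_, ?_, ?_⟩
  · exact (norm_sum_sub_path_le_rpow_of_Phi_le hp₀ hs.1 hsVec_le hℓ hΦ).trans
      ((hpow hexp₁).trans (by gcongr))
  · exact (supId_le_rpow_of_Phi_le hp₀ hΦ).trans ((hpow le_rfl).trans (by gcongr))
  · calc pnorm T p (fun r => pcPath sVec xVec r - θ.path (min θ.t r))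
        ≤ (T + 1) * (K / n) ^ (1 / (p + 1)) +
            2 * (k * (K / n) ^ ((3 * p + 3) / (2 * p)) * (∑ j, ‖xVec j‖ ^ p) ^ (1 / p)) :=
          pnorm_pcPath_sub_stoppedPath_le_of_Phi_le hp hs hsVec_le hℓ hΦ
      _ ≤ (T + 2) * (K ^ b * (n : ℝ) ^ (-(1 / (p + 1)))) +
            (T + 2) * (k * (K ^ b * (n : ℝ) ^ (-((3 * p + 3) / (2 * p)))) *
              (∑ j, ‖xVec j‖ ^ p) ^ (1 / p)) := by
          gcongr
          · linarith
          · exact hpow hexp₁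
          · linarith
          · exact hpow hexp₂
      _ = _ := by ring

/-- (Lemma 5.4) Estimates on 1-optimal points `(θ̂, ℓ̂)` in the definition of
`u^n(s, η^{λ_i}(x))`: here `i = m+1`, `xVec = (x_1,…,x_{i-1},x)`, the constant `C > 0`
depends only on `T`, `p` and the bound `M` on `u`. -/
theorem stmt3 (T : ℝ) (hT : 0 < T) (d : ℕ) (hd : 1 ≤ d) (p : ℝ) (hp : 1 ≤ p) (M : ℝ) :
    ∃ C > 0, ∀ u : Theta T d → ℝ, (∀ θ : Theta T d, |u θ| ≤ M) →
    ∀ n : ℕ, 1 ≤ n →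
    ∀ (m : ℕ) (sVec : Fin (m + 1) → ℝ) (xVec : Fin (m + 1) → E d),
      sVec 0 = 0 → StrictMono sVec → sVec (Fin.last m) ≤ T →
    ∀ s : ℝ, sVec (Fin.last m) ≤ s → s ≤ T →
    ∀ (θhat : Theta T d) (ℓhat : ℝ → ℝ),
      (θhat.t, θhat.path) ≠ (0, 0) → ℓhat ∈ LL T θhat.t s →
      -- 1-optimality of `(θ̂, ℓ̂)`
      reg T p u n s (pcPath sVec xVec) - u θhat
          + (n : ℝ) * Phi T p s (pcPath sVec xVec) θhat ℓhat < 1 →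
      ‖(∑ j, xVec j) - θhat.path θhat.t‖ ≤ C * (n : ℝ) ^ (-(1 / (p + 1))) ∧
      supId T ℓhat ≤ C * (n : ℝ) ^ (-((3 * p + 3) / 2)) ∧
      pnorm T p (fun r => pcPath sVec xVec r - θhat.path (min θhat.t r)) ≤
        C * ((n : ℝ) ^ (-(1 / (p + 1)))
          + ((m : ℝ) + 1) * (n : ℝ) ^ (-((3 * p + 3) / (2 * p)))
              * (∑ j, ‖xVec j‖ ^ p) ^ (1 / p)) := by
  obtain ⟨C, hC, hbound⟩ := stmt3_general T hT d p hp M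
  refine ⟨C, hC, fun u hu n hn m sVec xVec h0 hmono _ s hs hsT θhat ℓhat _ hℓ hopt => ?_⟩
  have hsVec (j : Fin (m + 1)) : sVec j ∈ Icc 0 s :=
    ⟨h0 ▸ hmono.monotone (Fin.zero_le j), (hmono.monotone (Fin.le_last j)).trans hs⟩
  simpa only [Nat.cast_add_one] using
    hbound u hu n hn (m + 1) sVec xVec s ⟨(hsVec 0).1.trans (hsVec 0).2, hsT⟩ hsVec θhat ℓhat hℓ
      hopt
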